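/- Under the generic-association setup described in the context, suppose the Gaussian-approximation hypothesis |P((I−μ)/σ ≤ x) − Ψ(x)| ≤ Ξ·c(x) holds for all x ∈ ℝ. Then the ergodic capacity C_erg = E[log(1 + SINR)] satisfies ∫₀^∞ E[V⁻(H,τ)] dτ ≤ C_erg ≤ ∫₀^∞ E[V⁺(H,τ)] dτ, where the integrals and the expectation are taken in the extended nonnegative reals. -/

import Mathlib

open MeasureTheory ProbabilityTheory
open scoped ProbabilityTheory ENNReal

/-- The standard normal cumulative distribution function. -/
noncomputable def stdNormalCDF (x : ℝ) : ℝ :=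
  (Real.sqrt (2 * Real.pi))⁻¹ * ∫ t in Set.Iic x, Real.exp (-(t ^ 2) / 2)

/-- The Berry–Esseen multiplicative function `c(x) = min{0.4785, 31.935/(1+|x|³)}`. -/
noncomputable def berryC (x : ℝ) : ℝ := min 0.4785 (31.935 / (1 + |x| ^ 3))

/-!
Since `log (1 + SINR) ≥ τ` holds exactly when `I` is at most an explicit function of `H` and `τ`,
the layer-cake formula and the independence of `H` and `I` express the ergodic capacity exactly as
a double integral of the distribution function of `I`. Bounds on that distribution function
therefore turn into bounds on the capacity. Where the interference tolerance is negative, the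
distribution function of `I ≥ 0` vanishes, which justifies the cutoff in the upper bound.
-/

section

variable {Ω : Type*} {mΩ : MeasurableSpace Ω} {μ : Measure Ω}

theorem lintegral_log_one_add_eq_lintegral_meas_le {X : Ω → ℝ} (hX0 : 0 ≤ᵐ[μ] X)
    (hX : AEMeasurable X μ) :
    ∫⁻ ω, ENNReal.ofReal (Real.log (1 + X ω)) ∂μ =
      ∫⁻ τ in Set.Ioi (0 : ℝ), μ {ω | Real.exp τ - 1 ≤ X ω} := by
  have hlog0 : 0 ≤ᵐ[μ] fun ω => Real.log (1 + X ω) := by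
    filter_upwards [hX0] with ω hω using Real.log_nonneg (le_add_of_nonneg_right hω)
  rw [lintegral_eq_lintegral_meas_le μ hlog0 (by fun_prop)]
  refine lintegral_congr fun τ => measure_congr (Filter.eventuallyEq_set.mpr ?_)
  filter_upwards [hX0] with ω hω
  have hpos : 0 < 1 + X ω := add_pos_of_pos_of_nonneg one_pos hω
  simp only [Real.le_log_iff_exp_le hpos, sub_le_iff_le_add']

theorem measure_prodMk_mem_eq_lintegral_of_indepFun [IsFiniteMeasure μ] {α β : Type*}
    [MeasurableSpace α] [MeasurableSpace β] {X : Ω → α} {Y : Ω → β} (hX : AEMeasurable X μ)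
    (hY : AEMeasurable Y μ) (hXY : IndepFun X Y μ) {s : Set (α × β)} (hs : MeasurableSet s) :
    μ {ω | (X ω, Y ω) ∈ s} = ∫⁻ ω, μ {ω' | (X ω, Y ω') ∈ s} ∂μ :=
  calc μ {ω | (X ω, Y ω) ∈ s}
    _ = μ.map (fun ω => (X ω, Y ω)) s := (Measure.map_apply_of_aemeasurable (hX.prodMk hY) hs).symm
    _ = ∫⁻ x, μ.map Y (Prod.mk x ⁻¹' s) ∂μ.map X := by
      rw [hXY.map_prod_eq_prod_map_map hX hY, Measure.prod_apply hs]
    _ = ∫⁻ ω, μ.map Y (Prod.mk (X ω) ⁻¹' s) ∂μ :=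
      lintegral_map' (measurable_measure_prodMk_left hs).aemeasurable hX
    _ = ∫⁻ ω, μ {ω' | (X ω, Y ω') ∈ s} ∂μ :=
      lintegral_congr fun _ =>
        Measure.map_apply_of_aemeasurable hY (measurable_prodMk_left hs)

theorem ofReal_ite_max_zero_le_measure [IsFiniteMeasure μ] {c : Prop} [Decidable c] {s : Set Ω}
    {x : ℝ} (hx : x ≤ μ.real s) : ENNReal.ofReal (if c then max 0 x else 0) ≤ μ s := by
  refine ENNReal.ofReal_le_of_le_toReal ?_
  split_ifs
  · exact max_le measureReal_nonneg hx
  · exact measureReal_nonneg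

theorem measure_le_ofReal_ite_min_one [IsProbabilityMeasure μ] {c : Prop} [Decidable c]
    {s : Set Ω} {x : ℝ} (hx : μ.real s ≤ x) (hs : ¬c → μ s = 0) :
    μ s ≤ ENNReal.ofReal (if c then min 1 x else 0) := by
  split_ifs with hc
  · rw [← ofReal_measureReal (μ := μ) (s := s)]
    exact ENNReal.ofReal_le_ofReal (le_min measureReal_le_one hx)
  · simp [hs hc]

end

section

variable {P g N₀ PG h i τ : ℝ}

/-- The signal-to-interference-plus-noise ratio at fading `h` and interference `i`, where `P` is
the transmit power, `g` the path gain, `N₀` the noise power and `PG` the processing gain. -/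
noncomputable def sinr (P g N₀ PG h i : ℝ) : ℝ := P * h * g / (N₀ + i / PG)

/-- The interference tolerance at fading `h`: the largest interference at which the rate
`log (1 + SINR)` is still at least `τ`. Only meaningful for `τ > 0`; it is negative if the noise
alone already pushes the rate below `τ`. In the notation of the paper, `ζ(h, τ)` is its
standardization. -/
noncomputable def interferenceTolerance (P g N₀ PG h τ : ℝ) : ℝ :=
  P * (h * g / (Real.exp τ - 1) - N₀ / P) * PG

theorem interferenceTolerance_eq (hP : P ≠ 0) :
    interferenceTolerance P g N₀ PG h τ = (P * h * g / (Real.exp τ - 1) - N₀) * PG := by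
  unfold interferenceTolerance
  field_simp

theorem exp_sub_one_le_sinr_iff (hP : P ≠ 0) (hPG : 0 < PG) (hτ : 0 < τ)
    (hi : 0 < N₀ + i / PG) :
    Real.exp τ - 1 ≤ sinr P g N₀ PG h i ↔ i ≤ interferenceTolerance P g N₀ PG h τ := by
  have hexp : 0 < Real.exp τ - 1 := sub_pos.mpr (Real.one_lt_exp_iff.mpr hτ)
  rw [interferenceTolerance_eq hP, sinr, le_div_comm₀ hexp hi, ← div_le_iff₀ hPG,
    le_sub_iff_add_le']

theorem interferenceTolerance_nonneg_iff (hP : 0 < P) (hg : 0 < g) (hPG : 0 < PG) (hτ : 0 < τ) :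
    0 ≤ interferenceTolerance P g N₀ PG h τ ↔ (Real.exp τ - 1) * N₀ / (P * g) ≤ h := by
  have hexp : 0 < Real.exp τ - 1 := sub_pos.mpr (Real.one_lt_exp_iff.mpr hτ)
  rw [interferenceTolerance_eq hP.ne', mul_nonneg_iff_of_pos_right hPG, sub_nonneg,
    le_div_iff₀ hexp, div_le_iff₀ (mul_pos hP hg)]
  ring_nf

end

section

variable {Ω : Type*} {mΩ : MeasurableSpace Ω} {μ : Measure Ω} {H I : Ω → ℝ} {P g N₀ PG : ℝ}

theorem measure_exp_sub_one_le_sinr [IsFiniteMeasure μ] (hH : AEMeasurable H μ)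
    (hI : AEMeasurable I μ) (hHI : IndepFun H I μ) (hP : P ≠ 0) (hPG : 0 < PG)
    (hpos : ∀ᵐ ω ∂μ, 0 < N₀ + I ω / PG) {τ : ℝ} (hτ : 0 < τ) :
    μ {ω | Real.exp τ - 1 ≤ sinr P g N₀ PG (H ω) (I ω)} =
      ∫⁻ ω, μ {ω' | I ω' ≤ interferenceTolerance P g N₀ PG (H ω) τ} ∂μ := by
  have hmeas : MeasurableSet {p : ℝ × ℝ | p.2 ≤ interferenceTolerance P g N₀ PG p.1 τ} := by
    unfold interferenceTolerance
    exact measurableSet_le (by fun_prop) (by fun_prop)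
  calc μ {ω | Real.exp τ - 1 ≤ sinr P g N₀ PG (H ω) (I ω)}
    _ = μ {ω | I ω ≤ interferenceTolerance P g N₀ PG (H ω) τ} := by
      refine measure_congr (Filter.eventuallyEq_set.mpr ?_)
      filter_upwards [hpos] with ω hω using exp_sub_one_le_sinr_iff hP hPG hτ hω
    _ = ∫⁻ ω, μ {ω' | I ω' ≤ interferenceTolerance P g N₀ PG (H ω) τ} ∂μ :=
      measure_prodMk_mem_eq_lintegral_of_indepFun hH hI hHI hmeas

theorem lintegral_log_one_add_sinr [IsFiniteMeasure μ] (hH : AEMeasurable H μ)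
    (hI : AEMeasurable I μ) (hHI : IndepFun H I μ) (hH0 : 0 ≤ᵐ[μ] H) (hP : 0 < P) (hg : 0 < g)
    (hPG : 0 < PG) (hpos : ∀ᵐ ω ∂μ, 0 < N₀ + I ω / PG) :
    ∫⁻ ω, ENNReal.ofReal (Real.log (1 + sinr P g N₀ PG (H ω) (I ω))) ∂μ =
      ∫⁻ τ in Set.Ioi (0 : ℝ),
        ∫⁻ ω, μ {ω' | I ω' ≤ interferenceTolerance P g N₀ PG (H ω) τ} ∂μ := by
  have hsinr0 : 0 ≤ᵐ[μ] fun ω => sinr P g N₀ PG (H ω) (I ω) := by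
    filter_upwards [hH0, hpos] with ω hHω hω
    exact div_nonneg (mul_nonneg (mul_nonneg hP.le hHω) hg.le) hω.le
  have hsinr : AEMeasurable (fun ω => sinr P g N₀ PG (H ω) (I ω)) μ := by
    unfold sinr
    fun_prop
  rw [lintegral_log_one_add_eq_lintegral_meas_le hsinr0 hsinr]
  exact setLIntegral_congr_fun measurableSet_Ioi fun τ hτ =>
    measure_exp_sub_one_le_sinr hH hI hHI hP.ne' hPG hpos hτ

theorem ergodic_capacity_bounds_generic_general [IsProbabilityMeasure μ] (hH : AEMeasurable H μ)
    (hI : AEMeasurable I μ) (hHI : IndepFun H I μ) (hH0 : 0 ≤ᵐ[μ] H) (hI0 : 0 ≤ᵐ[μ] I)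
    (hP : 0 < P) (hg : 0 < g) (hPG : 0 < PG) (hpos : ∀ᵐ ω ∂μ, 0 < N₀ + I ω / PG)
    {L U : ℝ → ℝ} (hL : ∀ t, L t ≤ μ.real {ω | I ω ≤ t}) (hU : ∀ t, μ.real {ω | I ω ≤ t} ≤ U t) :
    (∫⁻ τ in Set.Ioi (0 : ℝ), ∫⁻ ω, ENNReal.ofReal
        (if (Real.exp τ - 1) * N₀ / (P * g) ≤ H ω then
          max 0 (L (interferenceTolerance P g N₀ PG (H ω) τ)) else 0) ∂μ) ≤
        (∫⁻ ω, ENNReal.ofReal (Real.log (1 + sinr P g N₀ PG (H ω) (I ω))) ∂μ) ∧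
      (∫⁻ ω, ENNReal.ofReal (Real.log (1 + sinr P g N₀ PG (H ω) (I ω))) ∂μ) ≤
        ∫⁻ τ in Set.Ioi (0 : ℝ), ∫⁻ ω, ENNReal.ofReal
          (if (Real.exp τ - 1) * N₀ / (P * g) ≤ H ω then
            min 1 (U (interferenceTolerance P g N₀ PG (H ω) τ)) else 0) ∂μ := by
  have hI_neg {t : ℝ} (ht : t < 0) : μ {ω | I ω ≤ t} = 0 := by
    refine measure_eq_zero_iff_ae_notMem.mpr ?_
    filter_upwards [hI0] with ω hω using (ht.trans_le hω).not_ge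
  rw [lintegral_log_one_add_sinr hH hI hHI hH0 hP hg hPG hpos]
  constructor <;> refine setLIntegral_mono' measurableSet_Ioi fun τ hτ => lintegral_mono fun ω => ?_
  · exact ofReal_ite_max_zero_le_measure (hL _)
  · refine measure_le_ofReal_ite_min_one (hU _) fun hcut => hI_neg ?_
    rwa [← interferenceTolerance_nonneg_iff hP hg hPG hτ, not_le] at hcut

end

theorem abs_measureReal_le_sub_of_standardized {Ω : Type*} {mΩ : MeasurableSpace Ω}
    {μ : Measure Ω} {Y : Ω → ℝ} {m s : ℝ} (hs : 0 < s) {F ε : ℝ → ℝ}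
    (hF : ∀ x, |μ.real {ω | (Y ω - m) / s ≤ x} - F x| ≤ ε x) (t : ℝ) :
    |μ.real {ω | Y ω ≤ t} - F ((t - m) / s)| ≤ ε ((t - m) / s) := by
  simpa only [div_le_div_iff_of_pos_right hs, sub_le_sub_iff_right] using hF ((t - m) / s)

/-- Theorem 5: bounds on the ergodic capacity `C_erg = E[log(1+SINR)]` under the
generic association policy, assuming the Gaussian approximation bound for the
interference `I`.  All integrals are taken in the extended nonnegative reals. -/
theorem ergodic_capacity_bounds_generic
    {Ω : Type*} [MeasureSpace Ω] [IsProbabilityMeasure (ℙ : Measure Ω)]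
    (H I : Ω → ℝ) (hHmeas : Measurable H) (hImeas : Measurable I)
    (hindep : IndepFun H I ℙ)
    (hHnn : ∀ ω, 0 ≤ H ω) (hInn : ∀ ω, 0 ≤ I ω)
    (hI1 : Integrable I ℙ) (hI2 : Integrable (fun ω => (I ω) ^ 2) ℙ)
    (μ σ : ℝ) (hμ : μ = ∫ ω, I ω) (hσ : σ ^ 2 = ∫ ω, (I ω - μ) ^ 2) (hσpos : 0 < σ)
    (P g N₀ PG Ξ : ℝ) (hP : 0 < P) (hg : 0 < g) (hN₀ : 0 ≤ N₀) (hPG : 1 ≤ PG)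
    (hΞ : 0 ≤ Ξ)
    (hpos : ∀ᵐ ω ∂(ℙ : Measure Ω), 0 < N₀ + I ω / PG)
    (hGauss : ∀ x : ℝ,
      |(ℙ {ω | (I ω - μ) / σ ≤ x}).toReal - stdNormalCDF x| ≤ Ξ * berryC x)
    (ζ Vp Vm : ℝ → ℝ → ℝ)
    (hζ : ∀ h τ, ζ h τ = (P * (h * g / (Real.exp τ - 1) - N₀ / P) * PG - μ) / σ)
    (hVp : ∀ h τ, Vp h τ =
      if (Real.exp τ - 1) * N₀ / (P * g) ≤ h then
        min 1 (stdNormalCDF (ζ h τ) + Ξ * berryC (ζ h τ)) else 0)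
    (hVm : ∀ h τ, Vm h τ =
      if (Real.exp τ - 1) * N₀ / (P * g) ≤ h then
        max 0 (stdNormalCDF (ζ h τ) - Ξ * berryC (ζ h τ)) else 0) :
    (∫⁻ τ in Set.Ioi (0 : ℝ), ∫⁻ ω, ENNReal.ofReal (Vm (H ω) τ)) ≤
        (∫⁻ ω, ENNReal.ofReal (Real.log (1 + P * H ω * g / (N₀ + I ω / PG)))) ∧
      (∫⁻ ω, ENNReal.ofReal (Real.log (1 + P * H ω * g / (N₀ + I ω / PG)))) ≤
        ∫⁻ τ in Set.Ioi (0 : ℝ), ∫⁻ ω, ENNReal.ofReal (Vp (H ω) τ) := by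
  have hcdf (t : ℝ) := abs_sub_le_iff.mp (abs_measureReal_le_sub_of_standardized hσpos hGauss t)
  simpa only [hVm, hVp, hζ, sinr, interferenceTolerance] using
    ergodic_capacity_bounds_generic_general hHmeas.aemeasurable hImeas.aemeasurable hindep
      (.of_forall hHnn) (.of_forall hInn) hP hg (one_pos.trans_le hPG) hpos
      (fun t => sub_le_comm.mp (hcdf t).2) (fun t => sub_le_iff_le_add'.mp (hcdf t).1)
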